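/- Let W ∈ ℝ^{m×n} with m ≥ n have full column rank, and define the polyhedral max norm on ℝⁿ by ‖x‖_W := ‖Wx‖∞. Let A ∈ ℝ^{n×n}, and let μ_W(A) be the real number such that (‖I+hA‖_W − 1)/h → μ_W(A) as h → 0⁺, where ‖·‖_W also denotes the operator norm on ℝ^{n×n} induced by the vector norm ‖·‖_W. For H ∈ ℝ^{m×m} write μ∞(H) := max_{i} ( H_{ii} + Σ_{j≠i} |H_{ij}| ) (the ℓ∞ logarithmic norm). Then: (a) there exists H* ∈ ℝ^{m×m} with W·A = H*·W and μ∞(H*) = μ_W(A); and (b) for every H ∈ ℝ^{m×m} with W·A = H·W one has μ_W(A) ≤ μ∞(H). Consequently μ_W(A) equals the minimum of μ∞(H) over all H satisfying W·A = H·W, and this minimum is attained. -/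

import Mathlib

open Filter Topology

theorem cone_closed_aux {ι E : Type*} [Fintype ι] [DecidableEq ι] [NormedAddCommGroup E]
    [NormedSpace ℝ E] (f : (ι → ℝ) →ₗ[ℝ] E) (N : ℕ) :
    ∀ s : Finset ι, s.card = N →
      IsClosed (f '' {c | (∀ j, 0 ≤ c j) ∧ ∀ j, j ∉ s → c j = 0}) := by
  induction N with
  | zero =>
    intro s hs
    have hs' : s = ∅ := Finset.card_eq_zero.mp hs
    have : {c : ι → ℝ | (∀ j, 0 ≤ c j) ∧ ∀ j, j ∉ s → c j = 0} = {0} := by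
      ext c
      simp only [hs', Set.mem_ofPred_eq, Set.mem_singleton_iff]
      constructor
      · rintro ⟨-, h⟩
        ext j
        exact h j (by simp)
      · rintro rfl
        simp
    rw [this, Set.image_singleton]
    exact isClosed_singleton
  | succ N ih =>
    intro s hs
    by_cases hd : ∃ d : ι → ℝ, (∀ j, j ∉ s → d j = 0) ∧ f d = 0 ∧ ∃ j, 0 < d j
    · obtain ⟨d, hds, hfd, j0, hj0⟩ := hd
      have key : f '' {c | (∀ j, 0 ≤ c j) ∧ ∀ j, j ∉ s → c j = 0} =
          ⋃ k ∈ s, f '' {c | (∀ j, 0 ≤ c j) ∧ ∀ j, j ∉ s.erase k → c j = 0} := by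
        apply Set.Subset.antisymm
        · rintro _ ⟨c, ⟨hc0, hcs⟩, rfl⟩
          obtain ⟨k, hk, hmin⟩ := Finset.exists_min_image
            (Finset.univ.filter (fun j => 0 < d j)) (fun j => c j / d j) ⟨j0, by simp [hj0]⟩
          have hdk : 0 < d k := by simpa using hk
          have hks : k ∈ s := by
            by_contra h
            exact hdk.ne' (hds k h)
          simp only [Set.mem_iUnion]
          refine ⟨k, hks, c - (c k / d k) • d, ⟨?_, ?_⟩, ?_⟩
          · intro j
            have ht : 0 ≤ c k / d k := div_nonneg (hc0 k) hdk.le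
            simp only [Pi.sub_apply, Pi.smul_apply, smul_eq_mul]
            rcases le_or_gt (d j) 0 with h | h
            · nlinarith [hc0 j]
            · have := hmin j (by simp [h])
              rw [le_div_iff₀ h] at this
              linarith
          · intro j hj
            simp only [Pi.sub_apply, Pi.smul_apply, smul_eq_mul]
            by_cases hjk : j = k
            · subst hjk
              field_simp
              ring
            · have : j ∉ s := fun h => hj (Finset.mem_erase.mpr ⟨hjk, h⟩)
              rw [hcs j this, hds j this]
              ring
          · simp [hfd]
        · refine Set.iUnion₂_subset fun k _ => Set.image_mono ?_
          rintro c ⟨h1, h2⟩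
          exact ⟨h1, fun j hj => h2 j (fun h => hj (Finset.mem_of_mem_erase h))⟩
      rw [key]
      refine Set.Finite.isClosed_biUnion s.finite_toSet ?_
      intro k hk
      exact ih _ (by rw [Finset.card_erase_of_mem hk, hs]; rfl)
    · push Not at hd
      let V : Submodule ℝ (ι → ℝ) :=
        { carrier := {c | ∀ j, j ∉ s → c j = 0}
          add_mem' := by
            intro a b ha hb j hj
            simp [ha j hj, hb j hj]
          zero_mem' := by intro j _; rfl
          smul_mem' := by
            intro r a ha j hj
            simp [ha j hj] }
      have hker : LinearMap.ker (f.domRestrict V) = ⊥ := by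
        rw [LinearMap.ker_eq_bot']
        rintro ⟨d, hdV⟩ h
        have hfd : f d = 0 := h
        ext j
        have h1 := hd d hdV hfd j
        have h2 := hd (-d) (fun j hj => by simp [hdV j hj]) (by simp [hfd]) j
        simp only [Pi.neg_apply] at h2
        show d j = 0
        linarith
      have hemb := LinearMap.isClosedEmbedding_of_injective hker
      have hcl : IsClosed {c : V | ∀ j, 0 ≤ c.1 j} := by
        simp only [Set.ofPred_forall]
        refine isClosed_iInter fun j => isClosed_le continuous_const ?_
        exact (continuous_apply j).comp continuous_subtype_val
      convert hemb.isClosedMap _ hcl using 1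
      ext x
      constructor
      · rintro ⟨c, ⟨h1, h2⟩, rfl⟩
        exact ⟨⟨c, h2⟩, h1, rfl⟩
      · rintro ⟨⟨c, h2⟩, h1, rfl⟩
        exact ⟨c, ⟨h1, h2⟩, rfl⟩

theorem cone_closed_aux' {ι E : Type*} [Fintype ι] [DecidableEq ι] [NormedAddCommGroup E]
    [NormedSpace ℝ E] (f : (ι → ℝ) →ₗ[ℝ] E) : IsClosed (f '' {c | ∀ j, 0 ≤ c j}) := by
  simpa using cone_closed_aux f _ Finset.univ rfl

/-- closedness of the LP value set -/
theorem lp_closed_aux {m n : ℕ} (W : Matrix (Fin m) (Fin n) ℝ) (i : Fin m) :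
    IsClosed {x : (Fin n → ℝ) × ℝ | ∃ a : Fin m → ℝ, ∑ j, a j • W j = x.1 ∧
      a i + ∑ j ∈ Finset.univ.erase i, |a j| ≤ x.2} := by
  let v : (Fin m ⊕ Fin m) ⊕ Unit → (Fin n → ℝ) × ℝ :=
    Sum.elim (Sum.elim (fun j => (W j, 1)) (fun j => (-W j, if j = i then -1 else 1)))
      (fun _ => (0, 1))
  let f := Fintype.linearCombination ℝ v
  have hf : ∀ c, f c = (∑ j, (c (.inl (.inl j)) - c (.inl (.inr j))) • W j,
      (c (.inl (.inl i)) - c (.inl (.inr i))) +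
      ∑ j ∈ Finset.univ.erase i, (c (.inl (.inl j)) + c (.inl (.inr j))) + c (.inr ())) := by
    intro c
    have h1 : f c = ∑ k, c k • v k := rfl
    rw [h1]
    apply Prod.ext
    · simp [Fintype.sum_sum_type, v, Prod.fst_sum, add_smul, Finset.sum_add_distrib,
        sub_eq_add_neg]
    · simp only [Fintype.sum_sum_type, v, Prod.snd_sum, Prod.snd_add, Sum.elim_inl, Sum.elim_inr,
        Prod.smul_snd, smul_eq_mul, mul_one, Finset.univ_unique, Finset.sum_singleton]
      rw [← Finset.add_sum_erase _ _ (Finset.mem_univ i),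
        ← Finset.add_sum_erase (f := fun j => c (.inl (.inr j)) * _) _ (Finset.mem_univ i)]
      have : ∑ j ∈ Finset.univ.erase i, c (.inl (.inr j)) * (if j = i then (-1:ℝ) else 1) =
          ∑ j ∈ Finset.univ.erase i, c (.inl (.inr j)) := by
        apply Finset.sum_congr rfl
        intro j hj
        simp [Finset.ne_of_mem_erase hj]
      rw [this, Finset.sum_add_distrib]
      simp
      ring
  have hcl := cone_closed_aux' f
  refine Eq.mpr (congrArg IsClosed ?_) hcl
  refine Set.ext ?_
  rintro ⟨x, t⟩
  constructor
  · rintro ⟨a, h1, h2⟩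
    simp only at h1 h2
    refine ⟨Sum.elim (Sum.elim (fun j => (a j)⁺) (fun j => (a j)⁻))
      (fun _ => t - (a i + ∑ j ∈ Finset.univ.erase i, |a j|)), ?_, ?_⟩
    · rintro ((j | j) | j)
      · exact posPart_nonneg _
      · exact negPart_nonneg _
      · simpa using h2
    · rw [hf]
      simp [posPart_sub_negPart, posPart_add_negPart, h1]
  · rintro ⟨c, hc, h⟩
    rw [hf] at h
    refine ⟨fun j => c (.inl (.inl j)) - c (.inl (.inr j)), congrArg Prod.fst h, ?_⟩
    have h2 := congrArg Prod.snd h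
    simp only at h2 ⊢
    rw [← h2]
    have h3 : ∑ j ∈ Finset.univ.erase i, |c (.inl (.inl j)) - c (.inl (.inr j))| ≤
        ∑ j ∈ Finset.univ.erase i, (c (.inl (.inl j)) + c (.inl (.inr j))) := by
      apply Finset.sum_le_sum
      intro j _
      have := hc (.inl (.inl j))
      have := hc (.inl (.inr j))
      rw [abs_le]
      constructor <;> linarith
    have := hc (.inr ())
    linarith

theorem mulVec_abs_le_aux {m : ℕ} (H : Matrix (Fin m) (Fin m) ℝ) (y : Fin m → ℝ) (i : Fin m) :
    |H.mulVec y i| ≤ (∑ j, |H i j|) * ‖y‖ := by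
  rw [Matrix.mulVec, dotProduct, Finset.sum_mul]
  refine (Finset.abs_sum_le_sum_abs _ _).trans (Finset.sum_le_sum fun j _ => ?_)
  rw [abs_mul]
  exact mul_le_mul_of_nonneg_left (norm_le_pi_norm y j) (abs_nonneg _)

/-- Hahn-Banach for one row -/
theorem row_aux {m n : ℕ} (W : Matrix (Fin m) (Fin n) ℝ) (φ : (Fin m → ℝ) →ₗ[ℝ] ℝ) (ρ : ℝ)
    (hρ : 0 ≤ ρ) (h : ∀ z, φ (W.mulVec z) ≤ ρ * ‖W.mulVec z‖) :
    ∃ g : Fin m → ℝ, (∀ z, ∑ j, g j * W.mulVec z j = φ (W.mulVec z)) ∧ ∑ j, |g j| ≤ ρ := by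
  obtain ⟨G, hG1, hG2⟩ := exists_extension_of_le_sublinear
    (⟨LinearMap.range W.mulVecLin, φ.comp (Submodule.subtype _)⟩ : (Fin m → ℝ) →ₗ.[ℝ] ℝ)
    (fun y => ρ * ‖y‖)
    (by
      intro c hc x
      rw [norm_smul, Real.norm_of_nonneg hc.le]
      ring)
    (by
      intro x y
      rw [← mul_add]
      exact mul_le_mul_of_nonneg_left (norm_add_le x y) hρ)
    (by
      rintro ⟨_, z, rfl⟩
      exact h z)
  have hGy : ∀ y : Fin m → ℝ, G y = ∑ j, G (Pi.single j 1) * y j := by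
    intro y
    rw [LinearMap.pi_apply_eq_sum_univ G y]
    refine Finset.sum_congr rfl fun j _ => ?_
    rw [smul_eq_mul, mul_comm]
    congr 2
    ext k
    simp [Pi.single_apply, eq_comm]
  refine ⟨fun j => G (Pi.single j 1), ?_, ?_⟩
  · intro z
    rw [← hGy]
    exact hG1 ⟨W.mulVec z, z, rfl⟩
  · have h1 := hG2 (fun j => SignType.sign (G (Pi.single j 1)))
    rw [hGy] at h1
    simp only [self_mul_sign] at h1
    refine h1.trans ?_
    refine mul_le_of_le_one_right hρ ?_
    rw [pi_norm_le_iff_of_nonneg zero_le_one]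
    intro j
    rcases SignType.trichotomy (SignType.sign (G (Pi.single j 1))) with h | h | h <;> simp [h]

/-- the logarithmic norm induced by the polyhedral max norm
`‖x‖_W = ‖Wx‖∞` equals the minimum of the `ℓ∞` logarithmic norm `μ∞(H)` over
all matrices `H` satisfying `W·A = H·W`, and this minimum is attained. -/
theorem polyhedral_lognorm_eq_min_linear_program
    (m n : ℕ) (hmn : n ≤ m)
    (W : Matrix (Fin m) (Fin n) ℝ) (hW : Function.Injective W.mulVecLin)
    (A : Matrix (Fin n) (Fin n) ℝ)
    (NW : (Fin n → ℝ) → ℝ) (hNW : ∀ z : Fin n → ℝ, NW z = ⨆ i, |W.mulVec z i|)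
    (opW : Matrix (Fin n) (Fin n) ℝ → ℝ)
    (hopW : ∀ B : Matrix (Fin n) (Fin n) ℝ,
      opW B = sSup {r : ℝ | ∃ z : Fin n → ℝ, NW z = 1 ∧ r = NW (B.mulVec z)})
    (muInf : Matrix (Fin m) (Fin m) ℝ → ℝ)
    (hmuInf : ∀ H : Matrix (Fin m) (Fin m) ℝ,
      muInf H = ⨆ i, (H i i + ∑ j ∈ Finset.univ.erase i, |H i j|))
    (μWA : ℝ)
    (hμ : Tendsto (fun h : ℝ => (opW (1 + h • A) - 1) / h) (𝓝[>] (0:ℝ)) (𝓝 μWA)) :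
    (∃ Hstar : Matrix (Fin m) (Fin m) ℝ, W * A = Hstar * W ∧ muInf Hstar = μWA) ∧
    (∀ H : Matrix (Fin m) (Fin m) ℝ, W * A = H * W → μWA ≤ muInf H) := by
  have hN : ∀ z, NW z = ‖W.mulVec z‖ := by
    intro z
    rw [hNW]
    apply le_antisymm
    · exact Real.iSup_le (fun i => norm_le_pi_norm (W.mulVec z) i) (norm_nonneg _)
    · rw [pi_norm_le_iff_of_nonneg (Real.iSup_nonneg fun i => abs_nonneg _)]
      intro i
      exact le_ciSup (f := fun i => |W.mulVec z i|) (Set.finite_range _).bddAbove i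
  have hb : ∀ H : Matrix (Fin m) (Fin m) ℝ, W * A = H * W → μWA ≤ muInf H := by
    intro H hH
    have e1 : ∀ᶠ h : ℝ in 𝓝[>] (0:ℝ), 0 ≤ 1 + h * muInf H := by
      apply eventually_nhdsWithin_of_eventually_nhds
      have : Tendsto (fun h : ℝ => 1 + h * muInf H) (𝓝 0) (𝓝 (1 + 0 * muInf H)) :=
        Continuous.tendsto (by fun_prop) 0
      exact (this.eventually (lt_mem_nhds (by norm_num))).mono fun _ h => le_of_lt h
    have e2 : ∀ᶠ h : ℝ in 𝓝[>] (0:ℝ), ∀ i, 0 ≤ 1 + h * H i i := by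
      apply eventually_nhdsWithin_of_eventually_nhds
      rw [eventually_all]
      intro i
      have : Tendsto (fun h : ℝ => 1 + h * H i i) (𝓝 0) (𝓝 (1 + 0 * H i i)) :=
        Continuous.tendsto (by fun_prop) 0
      exact (this.eventually (lt_mem_nhds (by norm_num))).mono fun _ h => le_of_lt h
    refine le_of_tendsto hμ ?_
    filter_upwards [e1, e2, self_mem_nhdsWithin] with h h1 h2 h0
    have h0 : 0 < h := h0
    rw [div_le_iff₀ h0, sub_le_iff_le_add, hopW]
    refine Real.sSup_le ?_ (by linarith)
    rintro _ ⟨z, hz, rfl⟩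
    rw [hN] at hz ⊢
    rw [pi_norm_le_iff_of_nonneg (by linarith)]
    intro i
    have hWz : W.mulVec ((1 + h • A).mulVec z) = (1 + h • H).mulVec (W.mulVec z) := by
      rw [Matrix.mulVec_mulVec, Matrix.mulVec_mulVec, Matrix.mul_add, Matrix.add_mul,
        Matrix.mul_smul, hH, Matrix.smul_mul, Matrix.mul_one, Matrix.one_mul]
    rw [hWz, Real.norm_eq_abs]
    refine (mulVec_abs_le_aux _ _ i).trans ?_
    rw [hz, mul_one, ← Finset.add_sum_erase _ _ (Finset.mem_univ i)]
    have h3 : ∑ j ∈ Finset.univ.erase i, |(1 + h • H) i j| =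
        h * ∑ j ∈ Finset.univ.erase i, |H i j| := by
      rw [Finset.mul_sum]
      refine Finset.sum_congr rfl fun j hj => ?_
      have : i ≠ j := (Finset.ne_of_mem_erase hj).symm
      simp [Matrix.one_apply_ne this, abs_mul, abs_of_pos h0]
    have h4 : |(1 + h • H) i i| = 1 + h * H i i := by
      simp [abs_of_nonneg (h2 i)]
    have h5 : H i i + ∑ j ∈ Finset.univ.erase i, |H i j| ≤ muInf H := by
      rw [hmuInf]
      exact le_ciSup (f := fun i => H i i + ∑ j ∈ Finset.univ.erase i, |H i j|)
        (Set.finite_range _).bddAbove i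
    rw [h3, h4]
    nlinarith
  refine ⟨?_, hb⟩
  obtain ⟨g, hg⟩ := LinearMap.exists_leftInverse_of_injective W.mulVecLin
    (LinearMap.ker_eq_bot.mpr hW)
  have hgz : ∀ z, g (W.mulVec z) = z := fun z => LinearMap.congr_fun hg z
  have hop0 : ∀ B, 0 ≤ opW B := by
    intro B
    rw [hopW]
    apply Real.sSup_nonneg
    rintro _ ⟨z, -, rfl⟩
    rw [hN]
    exact norm_nonneg _
  have hopb : ∀ B z, NW (B.mulVec z) ≤ opW B * ‖W.mulVec z‖ := by
    intro B z
    have hbdd : BddAbove {r : ℝ | ∃ z : Fin n → ℝ, NW z = 1 ∧ r = NW (B.mulVec z)} := by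
      let T := LinearMap.toContinuousLinearMap (W.mulVecLin ∘ₗ B.mulVecLin ∘ₗ g)
      refine ⟨‖T‖, ?_⟩
      rintro _ ⟨z, hz, rfl⟩
      have := T.le_opNorm (W.mulVec z)
      rw [← hN z, hz, mul_one] at this
      rw [hN]
      simpa [T, hgz] using this
    by_cases hz : ‖W.mulVec z‖ = 0
    · have hz0 : z = 0 := by
        rw [← hgz z, norm_eq_zero.mp hz, map_zero]
      subst hz0
      simp [hN]
    · have hpos : 0 < ‖W.mulVec z‖ := lt_of_le_of_ne (norm_nonneg _) (Ne.symm hz)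
      have h1 : ‖W.mulVec z‖⁻¹ * NW (B.mulVec z) ≤ opW B := by
        rw [hopW]
        apply le_csSup hbdd
        refine ⟨‖W.mulVec z‖⁻¹ • z, ?_, ?_⟩
        · rw [hN, Matrix.mulVec_smul, norm_smul, norm_inv, norm_norm, inv_mul_cancel₀ hz]
        · rw [hN, hN, Matrix.mulVec_smul, Matrix.mulVec_smul, norm_smul, norm_inv, norm_norm]
      rwa [inv_mul_le_iff₀ hpos, mul_comm] at h1
  have hrow : ∀ i, ∃ a : Fin m → ℝ, ∑ j, a j • W j = (W * A) i ∧
      a i + ∑ j ∈ Finset.univ.erase i, |a j| ≤ μWA := by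
    intro i
    have hcl := lp_closed_aux W i
    have ht : Tendsto (fun h : ℝ => (((W * A) i, (opW (1 + h • A) - 1) / h) : (Fin n → ℝ) × ℝ))
        (𝓝[>] (0:ℝ)) (𝓝 ((W * A) i, μWA)) := tendsto_const_nhds.prodMk_nhds hμ
    refine hcl.mem_of_tendsto ht ?_
    filter_upwards [self_mem_nhdsWithin] with h h0
    have h0 : 0 < h := h0
    obtain ⟨b, hb1, hb2⟩ := row_aux W
      (LinearMap.proj i ∘ₗ W.mulVecLin ∘ₗ (1 + h • A).mulVecLin ∘ₗ g) (opW (1 + h • A)) (hop0 _)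
      (by
        intro z
        have h1 := hopb (1 + h • A) z
        rw [hN] at h1
        have h2 := norm_le_pi_norm (W.mulVec ((1 + h • A).mulVec z)) i
        have h3 := le_abs_self (W.mulVec ((1 + h • A).mulVec z) i)
        rw [Real.norm_eq_abs] at h2
        simp only [LinearMap.comp_apply, Matrix.mulVecLin_apply, LinearMap.proj_apply, hgz]
        linarith)
    refine ⟨h⁻¹ • (b - Pi.single i 1), ?_, ?_⟩
    · ext k
      have h1 := hb1 (Pi.single k 1)
      simp only [LinearMap.comp_apply, Matrix.mulVecLin_apply, LinearMap.proj_apply, hgz] at h1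
      rw [Matrix.mulVec_mulVec, Matrix.mul_add, Matrix.mul_one, Matrix.mul_smul] at h1
      simp only [Matrix.mulVec_single_one, Matrix.col_apply, Matrix.add_apply, Matrix.smul_apply,
        smul_eq_mul] at h1
      simp only [Finset.sum_apply, Pi.smul_apply, Pi.sub_apply, smul_eq_mul, mul_assoc,
        ← Finset.mul_sum, sub_mul, Finset.sum_sub_distrib, h1]
      simp [Pi.single_apply]
      field_simp
    · have h1 : ∑ j ∈ Finset.univ.erase i, |(h⁻¹ • (b - Pi.single i 1) : Fin m → ℝ) j| =
          h⁻¹ * ∑ j ∈ Finset.univ.erase i, |b j| := by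
        rw [Finset.mul_sum]
        refine Finset.sum_congr rfl fun j hj => ?_
        simp [Finset.ne_of_mem_erase hj, abs_mul, abs_of_pos h0]
      rw [h1, le_div_iff₀ h0]
      rw [← Finset.add_sum_erase _ _ (Finset.mem_univ i)] at hb2
      simp only [Pi.smul_apply, Pi.sub_apply, Pi.single_eq_same, smul_eq_mul]
      have h2 := le_abs_self (b i)
      have h3 : (h⁻¹ * (b i - 1) + h⁻¹ * ∑ j ∈ Finset.univ.erase i, |b j|) * h =
          (b i - 1) + ∑ j ∈ Finset.univ.erase i, |b j| := by
        field_simp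
      rw [h3]
      linarith
  choose a ha1 ha2 using hrow
  have hWA : W * A = Matrix.of a * W := by
    ext i k
    rw [← ha1 i]
    simp [Matrix.mul_apply]
  refine ⟨Matrix.of a, hWA, le_antisymm ?_ (hb _ hWA)⟩
  rcases isEmpty_or_nonempty (Fin m) with hm | hm
  · exfalso
    have hop : ∀ B, opW B = 0 := by
      intro B
      rw [hopW]
      convert Real.sSup_empty
      ext r
      simp [hNW]
    simp only [hop] at hμ
    refine not_tendsto_nhds_of_tendsto_atBot ?_ _ hμ
    have := tendsto_inv_nhdsGT_zero (𝕜 := ℝ)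
    refine (tendsto_neg_atTop_atBot.comp this).congr fun h => ?_
    simp [div_eq_mul_inv]
  · rw [hmuInf]
    exact ciSup_le fun i => ha2 i
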